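/- Let R be a local ring and let N be a finitely generated R-module. If N has finite length, or N is a syzygy of some finite length R-module, then [N] = 0 in Ḡ(R)_ℚ. -/

import Mathlib

open CategoryTheory Opposite Filter IsLocalRing

universe u

noncomputable section

/-- A bundled finitely generated `R`-module. -/
structure FGMod (R : Type u) [CommRing R] : Type (u + 1) where
  carrier : Type u
  [addCommGroup : AddCommGroup carrier]
  [module : Module R carrier]
  [finite : Module.Finite R carrier]

attribute [instance] FGMod.addCommGroup FGMod.module FGMod.finite

/-- The subgroup of relations coming from short exact sequences of finitely generated
modules. -/
def grothRelations (R : Type u) [CommRing R] : AddSubgroup (FreeAbelianGroup (FGMod R)) :=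
  AddSubgroup.closure {x | ∃ (A B C : FGMod R) (f : A.carrier →ₗ[R] B.carrier)
    (g : B.carrier →ₗ[R] C.carrier),
    Function.Injective f ∧ Function.Surjective g ∧ LinearMap.range f = LinearMap.ker g ∧
    x = FreeAbelianGroup.of B - FreeAbelianGroup.of A - FreeAbelianGroup.of C}

/-- The Grothendieck group `G(R)` of finitely generated `R`-modules. -/
def GrothGroup (R : Type u) [CommRing R] : Type (u + 1) :=
  FreeAbelianGroup (FGMod R) ⧸ grothRelations R

instance (R : Type u) [CommRing R] : AddCommGroup (GrothGroup R) :=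
  QuotientAddGroup.Quotient.addCommGroup _

/-- The class `[M]` of a finitely generated module in `G(R)`. -/
def grothClass (R : Type u) [CommRing R] (M : Type u) [AddCommGroup M] [Module R M]
    [Module.Finite R M] : GrothGroup R :=
  QuotientAddGroup.mk (FreeAbelianGroup.of (FGMod.mk (R := R) M))

/-- `[N] = 0` in the rationalized reduced Grothendieck group `Ḡ(R)_ℚ`; equivalently, some
nonzero integer multiple of `[N]` lies in `ℤ·[R] ⊆ G(R)`. -/
def VanishesInReducedGrothQ (R : Type u) [CommRing R] (N : Type u) [AddCommGroup N]
    [Module R N] [Module.Finite R N] : Prop :=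
  ∃ a b : ℤ, a ≠ 0 ∧ a • grothClass R N = b • grothClass R R

/-- The reduced Grothendieck group `Ḡ(R) = G(R)/ℤ·[R]`. -/
def ReducedGroth (R : Type u) [CommRing R] : Type (u + 1) :=
  GrothGroup R ⧸ AddSubgroup.zmultiples (grothClass R R)

instance (R : Type u) [CommRing R] : AddCommGroup (ReducedGroth R) :=
  QuotientAddGroup.Quotient.addCommGroup _

/-- `Ḡ(R)_ℚ = Ḡ(R) ⊗_ℤ ℚ`. -/
def ReducedGrothQ (R : Type u) [CommRing R] : Type (u + 1) :=
  TensorProduct ℤ ℚ (ReducedGroth R)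

instance (R : Type u) [CommRing R] : AddCommGroup (ReducedGrothQ R) :=
  TensorProduct.addCommGroup

/-- `NthSyzygy R k N X` : `N` is a `k`-th syzygy of `X`, i.e. there are surjections from
finitely generated free modules `F₁ ↠ X`, `F₂ ↠ ker(F₁ ↠ X)`, … such that `N` is
isomorphic to the `k`-th kernel. -/
def NthSyzygy (R : Type u) [CommRing R] :
    ℕ → ∀ (N : Type u) [AddCommGroup N] [Module R N],
      ∀ (X : Type u) [AddCommGroup X] [Module R X], Prop
  | 0 => fun N _ _ X _ _ => Nonempty (N ≃ₗ[R] X)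
  | k + 1 => fun N _ _ X _ _ => ∃ (F : Type u) (_ : AddCommGroup F) (_ : Module R F)
      (_ : Module.Free R F) (_ : Module.Finite R F) (g : F →ₗ[R] X),
      Function.Surjective g ∧ NthSyzygy R k N (LinearMap.ker g)

/-! In a local ring `R` with residue field `k`, a module `M` of finite length `ℓ` has class
`ℓ • [k]` by additivity along a composition series. So it is enough to find one nonzero module of
finite length whose class vanishes in `Ḡ(R)_ℚ`. If every prime is maximal, `R` itself has finite
length. Otherwise choose a prime `p` maximal among the non-maximal primes and a nonunit `x ∉ p`:
every prime containing `p` and `x` is maximal, so `(R ⧸ p) ⧸ x (R ⧸ p)` has finite length, and its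
class is `0` because multiplication by `x` is injective on `R ⧸ p`. Finally, free modules have
class `0` in `Ḡ(R)`, so a module vanishes there rationally if and only if its syzygies do. -/

section GrothClass

variable {R : Type u} [CommRing R]
  {A B C : Type u} [AddCommGroup A] [Module R A] [Module.Finite R A]
  [AddCommGroup B] [Module R B] [Module.Finite R B]
  [AddCommGroup C] [Module R C] [Module.Finite R C]

theorem grothClass_eq_add_of_exact (f : A →ₗ[R] B) (g : B →ₗ[R] C) (hf : Function.Injective f)
    (hg : Function.Surjective g) (h : Function.Exact f g) :
    grothClass R B = grothClass R A + grothClass R C := by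
  have mem_relations : FreeAbelianGroup.of (FGMod.mk (R := R) B) -
      FreeAbelianGroup.of (FGMod.mk A) - FreeAbelianGroup.of (FGMod.mk C) ∈ grothRelations R :=
    AddSubgroup.subset_closure
      ⟨FGMod.mk A, FGMod.mk B, FGMod.mk C, f, g, hf, hg, h.linearMap_ker_eq.symm, rfl⟩
  have sub_sub_eq_zero : grothClass R B - grothClass R A - grothClass R C = 0 :=
    (QuotientAddGroup.eq_zero_iff _).2 mem_relations
  rwa [sub_sub, sub_eq_zero] at sub_sub_eq_zero

theorem grothClass_eq_zero_of_subsingleton [Subsingleton A] : grothClass R A = 0 := by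
  have h := grothClass_eq_add_of_exact (R := R) (A := A) (B := A) (C := A) 0 0
    (Function.injective_of_subsingleton _) (Function.surjective_to_subsingleton _)
    fun _ ↦ ⟨fun _ ↦ ⟨0, Subsingleton.elim _ _⟩, fun _ ↦ Subsingleton.elim _ _⟩
  exact left_eq_add.mp h

theorem grothClass_congr (e : A ≃ₗ[R] B) : grothClass R A = grothClass R B := by
  rw [grothClass_eq_add_of_exact e.toLinearMap (0 : B →ₗ[R] PUnit.{u + 1}) e.injective
    (Function.surjective_to_subsingleton _) (LinearMap.exact_iff.2 (by simp)),
    grothClass_eq_zero_of_subsingleton (A := PUnit), add_zero]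

theorem grothClass_fin_fun (n : ℕ) : grothClass R (Fin n → R) = n • grothClass R R := by
  induction n with
  | zero => rw [grothClass_eq_zero_of_subsingleton, zero_smul]
  | succ n ih =>
    rw [← grothClass_congr (Fin.consLinearEquiv R fun _ : Fin (n + 1) ↦ R),
      grothClass_eq_add_of_exact (LinearMap.inl R R (Fin n → R)) (LinearMap.snd R R (Fin n → R))
        LinearMap.inl_injective LinearMap.snd_surjective .inl_snd, ih, succ_nsmul']

theorem grothClass_eq_finrank_nsmul [Nontrivial R] [Module.Free R A] :
    grothClass R A = Module.finrank R A • grothClass R R :=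
  (grothClass_congr (Module.finBasis R A).equivFun).trans (grothClass_fin_fun _)

open scoped Pointwise in
theorem grothClass_quotSMulTop_eq_zero {x : R} (hx : IsSMulRegular A x) :
    grothClass R (QuotSMulTop x A) = 0 := by
  have h := grothClass_eq_add_of_exact (LinearMap.lsmul R A x) (x • (⊤ : Submodule R A)).mkQ hx
    (Submodule.mkQ_surjective _)
    (LinearMap.exact_iff.2 (by rw [Submodule.ker_mkQ, LinearMap.range_eq_map]; rfl))
  exact left_eq_add.mp h

end GrothClass

section FiniteLength

variable {R : Type u} [CommRing R]

theorem isFiniteLength_of_forall_mem_support_isMaximal [IsNoetherianRing R] {M : Type u}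
    [AddCommGroup M] [Module R M] [Module.Finite R M]
    (h : ∀ p ∈ Module.support R M, p.asIdeal.IsMaximal) : IsFiniteLength R M := by
  revert h
  refine IsNoetherianRing.induction_on_isQuotientEquivQuotientPrime R ‹Module.Finite R M›
    (motive := fun N _ _ _ ↦ (∀ p ∈ Module.support R N, p.asIdeal.IsMaximal) → IsFiniteLength R N)
    (fun _ _ _ _ _ _ ↦ .of_subsingleton) ?quotient ?exact
  case quotient =>
    intro N _ _ _ p e h
    have : p.asIdeal.IsMaximal := h p <| by
      simp [e.support_eq, Module.support_eq_zeroLocus, Ideal.annihilator_quotient]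
    have : IsSimpleModule R N := isSimpleModule_iff_quot_maximal.2 ⟨p.asIdeal, this, ⟨e⟩⟩
    exact isFiniteLength_iff_isNoetherian_isArtinian.2 ⟨inferInstance, inferInstance⟩
  case exact =>
    intro N₁ _ _ _ N₂ _ _ _ N₃ _ _ _ f g hf hg hfg ih₁ ih₃ h
    rw [Module.support_of_exact hfg hf hg] at h
    have h₁ := ih₁ fun p hp ↦ h p (.inl hp)
    have h₃ := ih₃ fun p hp ↦ h p (.inr hp)
    rw [← Module.length_ne_top_iff] at h₁ h₃ ⊢
    rw [Module.length_eq_add_of_exact f g hf hg hfg]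
    exact WithTop.add_ne_top.2 ⟨h₁, h₃⟩

variable [IsLocalRing R] {M : Type u} [AddCommGroup M] [Module R M]

theorem grothClass_eq_length_nsmul [Module.Finite R M] (h : IsFiniteLength R M) :
    grothClass R M = (Module.length R M).toNat • grothClass R (ResidueField R) := by
  revert ‹Module.Finite R M›
  induction h with
  | of_subsingleton =>
    intro _
    rw [grothClass_eq_zero_of_subsingleton, Module.length_eq_zero, ENat.toNat_zero, zero_smul]
  | @of_simple_quotient M _ _ N simple hN ih =>
    intro _
    have := (isFiniteLength_iff_isNoetherian_isArtinian.1 hN).1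
    obtain ⟨m, hm, ⟨e⟩⟩ := isSimpleModule_iff_quot_maximal.1 simple
    obtain rfl := eq_maximalIdeal hm
    have quotient_eq : grothClass R (M ⧸ N) = grothClass R (ResidueField R) := grothClass_congr e
    have exact_mkQ : Function.Exact N.subtype N.mkQ := LinearMap.exact_subtype_mkQ N
    rw [grothClass_eq_add_of_exact N.subtype N.mkQ N.injective_subtype N.mkQ_surjective exact_mkQ,
      Module.length_eq_add_of_exact N.subtype N.mkQ N.injective_subtype N.mkQ_surjective exact_mkQ,
      Module.length_eq_one R (M ⧸ N),
      ENat.toNat_add (Module.length_ne_top_iff.2 hN) ENat.one_ne_top, ENat.toNat_one,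
      succ_nsmul, ih, quotient_eq]

end FiniteLength

section Vanishing

variable {R : Type u} [CommRing R]

variable (R) in
/-- The projection `G(R) → Ḡ(R)`; a class vanishes in `Ḡ(R)_ℚ` when its image is torsion. -/
def toReducedGroth : GrothGroup R →+ ReducedGroth R :=
  QuotientAddGroup.mk' (AddSubgroup.zmultiples (grothClass R R))

theorem toReducedGroth_eq_zero_iff {x : GrothGroup R} :
    toReducedGroth R x = 0 ↔ ∃ b : ℤ, x = b • grothClass R R := by
  simp only [eq_comm (a := x)]
  exact (QuotientAddGroup.eq_zero_iff x).trans AddSubgroup.mem_zmultiples_iff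

theorem vanishesInReducedGrothQ_iff_isOfFinAddOrder {M : Type u} [AddCommGroup M] [Module R M]
    [Module.Finite R M] :
    VanishesInReducedGrothQ R M ↔ IsOfFinAddOrder (toReducedGroth R (grothClass R M)) := by
  simp only [VanishesInReducedGrothQ, isOfFinAddOrder_iff_zsmul_eq_zero, ← map_zsmul,
    toReducedGroth_eq_zero_iff, exists_and_left]

theorem vanishesInReducedGrothQ_self : VanishesInReducedGrothQ R R :=
  ⟨1, 1, one_ne_zero, rfl⟩

theorem vanishesInReducedGrothQ_of_grothClass_eq_zero {M : Type u} [AddCommGroup M] [Module R M]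
    [Module.Finite R M] (h : grothClass R M = 0) : VanishesInReducedGrothQ R M :=
  ⟨1, 0, one_ne_zero, by rw [h, smul_zero, zero_smul]⟩

theorem toReducedGroth_grothClass_eq_zero_of_free [Nontrivial R] {F : Type u} [AddCommGroup F]
    [Module R F] [Module.Finite R F] [Module.Free R F] : toReducedGroth R (grothClass R F) = 0 :=
  toReducedGroth_eq_zero_iff.2
    ⟨Module.finrank R F, by rw [grothClass_eq_finrank_nsmul (A := F), natCast_zsmul]⟩

theorem vanishesInReducedGrothQ_ker_iff [IsNoetherianRing R] [Nontrivial R] {F M : Type u}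
    [AddCommGroup F] [Module R F] [Module.Finite R F] [Module.Free R F]
    [AddCommGroup M] [Module R M] [Module.Finite R M] {g : F →ₗ[R] M}
    (hg : Function.Surjective g) :
    VanishesInReducedGrothQ R (LinearMap.ker g) ↔ VanishesInReducedGrothQ R M := by
  have sum_eq_zero : toReducedGroth R (grothClass R (LinearMap.ker g)) +
      toReducedGroth R (grothClass R M) = 0 := by
    rw [← map_add, ← grothClass_eq_add_of_exact (LinearMap.ker g).subtype g
      (Submodule.injective_subtype _) hg (LinearMap.exact_subtype_ker_map g),
      toReducedGroth_grothClass_eq_zero_of_free]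
  rw [vanishesInReducedGrothQ_iff_isOfFinAddOrder, vanishesInReducedGrothQ_iff_isOfFinAddOrder,
    eq_neg_of_add_eq_zero_left sum_eq_zero, isOfFinAddOrder_neg_iff]

theorem NthSyzygy.vanishesInReducedGrothQ_iff [IsNoetherianRing R] [Nontrivial R] {k : ℕ}
    {N X : Type u} [AddCommGroup N] [Module R N] [Module.Finite R N]
    [AddCommGroup X] [Module R X] [Module.Finite R X] (h : NthSyzygy R k N X) :
    VanishesInReducedGrothQ R N ↔ VanishesInReducedGrothQ R X := by
  induction k generalizing X with
  | zero =>
    obtain ⟨e⟩ := h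
    simp only [VanishesInReducedGrothQ, grothClass_congr e]
  | succ k ih =>
    obtain ⟨F, _, _, _, _, g, hg, hN⟩ := h
    exact (ih hN).trans (vanishesInReducedGrothQ_ker_iff hg)

end Vanishing

section LocalRing

variable (R : Type u) [CommRing R] [IsLocalRing R] [IsNoetherianRing R]

theorem exists_nontrivial_isFiniteLength_vanishesInReducedGrothQ :
    ∃ (M : Type u) (_ : AddCommGroup M) (_ : Module R M) (_ : Module.Finite R M),
      Nontrivial M ∧ IsFiniteLength R M ∧ VanishesInReducedGrothQ R M := by
  by_cases hmax : ∀ p : Ideal R, p.IsPrime → p.IsMaximal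
  · exact ⟨R, inferInstance, inferInstance, inferInstance, inferInstance,
      isFiniteLength_of_forall_mem_support_isMaximal fun p _ ↦ hmax _ p.isPrime,
      vanishesInReducedGrothQ_self⟩
  push Not at hmax
  obtain ⟨p, ⟨prime_p, hp⟩, maximal_p⟩ := exists_maximal_of_wellFoundedGT _ hmax
  have p_lt : p < maximalIdeal R := (le_maximalIdeal prime_p.ne_top).lt_of_ne
    fun h ↦ hp (h ▸ maximalIdeal.isMaximal R)
  obtain ⟨x, hxm, hxp⟩ := SetLike.exists_of_lt p_lt
  have regular : IsSMulRegular (R ⧸ p) x :=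
    (isSMulRegular_quotient_iff_mem_of_smul_mem _ _).2
      fun _ h ↦ (prime_p.mem_or_mem h).resolve_left hxp
  refine ⟨QuotSMulTop x (R ⧸ p), inferInstance, inferInstance, inferInstance,
    nontrivial_quotSMulTop_of_mem_maximalIdeal _ hxm,
    isFiniteLength_of_forall_mem_support_isMaximal fun q hq ↦ ?_,
    vanishesInReducedGrothQ_of_grothClass_eq_zero (grothClass_quotSMulTop_eq_zero regular)⟩
  rw [Module.support_quotSMulTop, Module.support_eq_zeroLocus, Ideal.annihilator_quotient] at hq
  obtain ⟨p_le_q, x_mem_q⟩ := hq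
  by_contra q_not_maximal
  exact hxp (maximal_p ⟨q.isPrime, q_not_maximal⟩ p_le_q (x_mem_q rfl))

theorem vanishesInReducedGrothQ_residueField : VanishesInReducedGrothQ R (ResidueField R) := by
  obtain ⟨M, _, _, _, _, hM, vanishes⟩ := exists_nontrivial_isFiniteLength_vanishesInReducedGrothQ R
  have length_ne_zero : (Module.length R M).toNat ≠ 0 := by
    simp [Module.length_ne_top_iff.2 hM, Module.length_eq_zero_iff, not_subsingleton]
  rw [vanishesInReducedGrothQ_iff_isOfFinAddOrder, grothClass_eq_length_nsmul hM, map_nsmul]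
    at vanishes
  exact vanishesInReducedGrothQ_iff_isOfFinAddOrder.2 (vanishes.of_nsmul length_ne_zero)

variable {R}

theorem vanishesInReducedGrothQ_of_isFiniteLength {M : Type u} [AddCommGroup M] [Module R M]
    [Module.Finite R M] (h : IsFiniteLength R M) : VanishesInReducedGrothQ R M := by
  rw [vanishesInReducedGrothQ_iff_isOfFinAddOrder, grothClass_eq_length_nsmul h, map_nsmul]
  exact (vanishesInReducedGrothQ_iff_isOfFinAddOrder.1
    (vanishesInReducedGrothQ_residueField R)).nsmul

end LocalRing

theorem herbrand_stmt1 (R : Type u) [CommRing R] [IsLocalRing R] [IsNoetherianRing R]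
    (N : Type u) [AddCommGroup N] [Module R N] [Module.Finite R N]
    (h : IsFiniteLength R N ∨ ∃ (X : Type u) (_ : AddCommGroup X) (_ : Module R X)
      (_ : Module.Finite R X), IsFiniteLength R X ∧ ∃ k : ℕ, NthSyzygy R (k + 1) N X) :
    VanishesInReducedGrothQ R N := by
  rcases h with hN | ⟨X, _, _, _, hX, k, hk⟩
  · exact vanishesInReducedGrothQ_of_isFiniteLength hN
  · exact hk.vanishesInReducedGrothQ_iff.2 (vanishesInReducedGrothQ_of_isFiniteLength hX)
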